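/- Let f_s(p) = |p|²/(|p|² + s⁻²) on ℝ³ for s > 0, and let |X̂|² be as for the unit cube. Then ‖f_s − (2π)⁻³ f_s * |X̂|²‖_∞ ≤ C s^{1/2} for a universal constant C > 0. -/

import Mathlib

open MeasureTheory Real

/-- The one-dimensional kernel. -/
noncomputable def kker (t : ℝ) : ℝ := (2 * Real.sin (t / 2) / t) ^ 2

lemma kker_nonneg (t : ℝ) : 0 ≤ kker t := sq_nonneg _

lemma kker_meas : Measurable kker := by
  unfold kker; fun_prop

lemma kker_bound (t : ℝ) : kker t ≤ 10 * (1 + |t|) ^ (-2 : ℝ) := by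
  have h1 : kker t ≤ 1 := by
    unfold kker
    rw [sq_le_one_iff_abs_le_one, abs_div]
    refine div_le_one_of_le₀ ?_ (abs_nonneg _)
    have := Real.abs_sin_le_abs (x := t / 2)
    rw [abs_mul, abs_two]
    rw [abs_div, abs_two] at this
    linarith
  have h2 : t ^ 2 * kker t ≤ 4 := by
    unfold kker
    rcases eq_or_ne t 0 with rfl | ht
    · simp
    · have : t ^ 2 * (2 * Real.sin (t / 2) / t) ^ 2 = 4 * Real.sin (t / 2) ^ 2 := by
        field_simp; ring
      rw [this]
      have := Real.sin_sq_le_one (t / 2)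
      linarith
  have hp : 0 < 1 + |t| := by positivity
  rw [Real.rpow_neg hp.le, ← div_eq_mul_inv, le_div_iff₀ (by positivity)]
  have : (1 + |t|) ^ (2 : ℝ) = (1 + |t|) ^ 2 := by exact_mod_cast Real.rpow_natCast _ 2
  rw [this]
  have h3 : (1 + |t|) ^ 2 ≤ 2 * (1 + t ^ 2) := by
    nlinarith [sq_nonneg (1 - |t|), sq_abs t]
  nlinarith [mul_le_mul_of_nonneg_left h3 (kker_nonneg t)]

lemma wker_int : Integrable (fun t : ℝ => Real.sqrt (1 + |t|) * kker t) := by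
  have h := (integrable_one_add_norm (E := ℝ) (μ := volume) (r := 3 / 2)
    (by norm_num)).const_mul 10
  refine h.mono' ?_ ?_
  · exact ((by fun_prop : Measurable fun t : ℝ => Real.sqrt (1 + |t|)).mul
      kker_meas).aestronglyMeasurable
  · refine Filter.Eventually.of_forall fun t => ?_
    have hp : 0 < 1 + |t| := by positivity
    rw [Real.norm_eq_abs, abs_of_nonneg (mul_nonneg (Real.sqrt_nonneg _) (kker_nonneg t)),
      Real.norm_eq_abs]
    calc _ ≤ Real.sqrt (1 + |t|) * (10 * (1 + |t|) ^ (-2 : ℝ)) :=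
          mul_le_mul_of_nonneg_left (kker_bound t) (Real.sqrt_nonneg _)
      _ = 10 * ((1 + |t|) ^ (1 / 2 : ℝ) * (1 + |t|) ^ (-2 : ℝ)) := by
          rw [Real.sqrt_eq_rpow]; ring
      _ = 10 * (1 + |t|) ^ (-(3 / 2) : ℝ) := by
          rw [← Real.rpow_add hp]; norm_num

lemma kker_int : Integrable kker := by
  refine wker_int.mono' kker_meas.aestronglyMeasurable (Filter.Eventually.of_forall fun t => ?_)
  rw [Real.norm_eq_abs, abs_of_nonneg (kker_nonneg t)]
  refine le_mul_of_one_le_left (kker_nonneg t) ?_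
  rw [Real.one_le_sqrt]
  linarith [abs_nonneg t]

/-- The tent function. -/
noncomputable def tent (x : ℝ) : ℂ := ((max 0 (1 - |x|) : ℝ) : ℂ)

lemma tent_cont : Continuous tent := by
  unfold tent; fun_prop

lemma tent_zero {x : ℝ} (hx : x ∉ Set.Ioc (-1 : ℝ) 1) : tent x = 0 := by
  have : 1 ≤ |x| := by
    by_contra h
    push Not at h
    rw [abs_lt] at h
    exact hx ⟨h.1, h.2.le⟩
  unfold tent
  rw [max_eq_left (by linarith)]; simp

lemma tent_int : Integrable tent := by
  refine tent_cont.integrable_of_hasCompactSupport ?_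
  refine HasCompactSupport.intro (K := Set.Icc (-1) 1) isCompact_Icc fun x hx => ?_
  exact tent_zero fun h => hx ⟨h.1.le, h.2⟩

lemma tent_exp (z : ℂ) (hz : z ≠ 0) :
    ∫ x : ℝ, Complex.exp (z * x) * tent x
      = (Complex.exp z + Complex.exp (-z) - 2) / z ^ 2 := by
  have hc : Continuous fun x : ℝ => Complex.exp (z * x) * tent x := by
    have := tent_cont
    fun_prop
  rw [← setIntegral_eq_integral_of_forall_compl_eq_zero (s := Set.Ioc (-1 : ℝ) 1)
    (fun x hx => by rw [tent_zero hx, mul_zero]),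
    ← intervalIntegral.integral_of_le (by norm_num),
    ← intervalIntegral.integral_add_adjacent_intervals (b := 0)
      (hc.intervalIntegrable _ _) (hc.intervalIntegrable _ _)]
  have hexp : ∀ x : ℝ, HasDerivAt (fun x : ℝ => Complex.exp (z * x))
      (Complex.exp (z * x) * z) x := fun x => by
    have := ((Complex.ofRealCLM.hasDerivAt (x := x)).const_mul z).cexp
    simpa using this
  have hid : ∀ x : ℝ, HasDerivAt (fun x : ℝ => (x : ℂ)) 1 x := fun x => by
    have h := Complex.ofRealCLM.hasDerivAt (x := x)
    rw [Complex.ofRealCLM_apply, Complex.ofReal_one] at h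
    exact h
  have h1 : ∫ x in (-1 : ℝ)..0, Complex.exp (z * x) * tent x
      = 1 / z - 1 / z ^ 2 + Complex.exp (-z) / z ^ 2 := by
    have := intervalIntegral.integral_eq_sub_of_hasDerivAt (a := -1) (b := 0)
      (f := fun x : ℝ => (1 + (x : ℂ)) * Complex.exp (z * x) / z - Complex.exp (z * x) / z ^ 2)
      (f' := fun x : ℝ => Complex.exp (z * x) * tent x) ?_ (hc.intervalIntegrable _ _)
    · rw [this]; simp <;> ring
    · intro x hx
      rw [Set.uIcc_of_le (by norm_num)] at hx
      have ht : tent x = 1 + x := by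
        unfold tent
        rw [abs_of_nonpos hx.2, max_eq_right (by linarith [hx.1])]
        push_cast; ring
      have := ((((hid x).const_add 1).mul (hexp x)).div_const z).sub ((hexp x).div_const (z ^ 2))
      refine this.congr_deriv ?_
      rw [ht]; field_simp; ring
  have h2 : ∫ x in (0 : ℝ)..1, Complex.exp (z * x) * tent x
      = Complex.exp z / z ^ 2 - 1 / z - 1 / z ^ 2 := by
    have := intervalIntegral.integral_eq_sub_of_hasDerivAt (a := 0) (b := 1)
      (f := fun x : ℝ => (1 - (x : ℂ)) * Complex.exp (z * x) / z + Complex.exp (z * x) / z ^ 2)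
      (f' := fun x : ℝ => Complex.exp (z * x) * tent x) ?_ (hc.intervalIntegrable _ _)
    · rw [this]; simp; ring
    · intro x hx
      rw [Set.uIcc_of_le (by norm_num)] at hx
      have ht : tent x = 1 - x := by
        unfold tent
        rw [abs_of_nonneg hx.1, max_eq_right (by linarith [hx.2])]
        push_cast; ring
      have := ((((hid x).const_sub 1).mul (hexp x)).div_const z).add ((hexp x).div_const (z ^ 2))
      refine this.congr_deriv ?_
      rw [ht]; field_simp; ring
  rw [h1, h2]; ring

open FourierTransform in
lemma tent_fourier (w : ℝ) (hw : w ≠ 0) : 𝓕 tent w = ((kker (2 * π * w) : ℝ) : ℂ) := by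
  rw [Real.fourier_real_eq_integral_exp_smul]
  have hz : (((-2 * π * w : ℝ) : ℂ) * Complex.I) ≠ 0 := by
    have : (-2 * π * w : ℝ) ≠ 0 := by
      have := Real.pi_ne_zero
      simp [hw, this]
    exact mul_ne_zero (by exact_mod_cast this) Complex.I_ne_zero
  have := tent_exp _ hz
  have e : ∀ x : ℝ, Complex.exp (((-2 * π * x * w : ℝ) : ℂ) * Complex.I) • tent x
      = Complex.exp ((((-2 * π * w : ℝ) : ℂ) * Complex.I) * x) * tent x := fun x => by
    rw [smul_eq_mul]; congr 2; push_cast; ring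
  simp_rw [e]
  rw [this]
  have hcos : Complex.exp (((-2 * π * w : ℝ) : ℂ) * Complex.I)
      + Complex.exp (-(((-2 * π * w : ℝ) : ℂ) * Complex.I))
      = ((2 * Real.cos (2 * π * w) : ℝ) : ℂ) := by
    rw [← neg_mul, ← Complex.two_cos]
    have : -2 * π * w = -(2 * π * w) := by ring
    rw [this]; push_cast; rw [Complex.cos_neg]
  rw [hcos, mul_pow, Complex.I_sq]
  have : kker (2 * π * w) = (2 * Real.cos (2 * π * w) - 2) / ((-2 * π * w) ^ 2 * (-1)) := by
    unfold kker
    have h := Real.sin_sq_eq_half_sub (2 * π * w / 2)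
    rw [show 2 * (2 * π * w / 2) = 2 * π * w by ring] at h
    rw [div_pow, mul_pow]
    have h3 : Real.sin (2 * π * w / 2) ^ 2 = (1 - Real.cos (2 * π * w)) / 2 := by linarith
    rw [h3]
    have := Real.pi_ne_zero
    field_simp
    ring
  rw [this]; push_cast; rfl

open FourierTransform in
lemma kker_integral : ∫ t, kker t = 2 * π := by
  have hae : 𝓕 tent =ᵐ[volume] fun w : ℝ => ((kker (2 * π * w) : ℝ) : ℂ) := by
    filter_upwards [Measure.ae_ne volume (0 : ℝ)] with w hw using tent_fourier w hw
  have hi : Integrable (fun w : ℝ => kker (2 * π * w)) :=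
    kker_int.comp_mul_left' (by positivity)
  have hF : Integrable (𝓕 tent) := (hi.ofReal (𝕜 := ℂ)).congr hae.symm
  have h := tent_int.fourierInv_fourier_eq hF (v := 0) tent_cont.continuousAt
  have h0 : tent 0 = 1 := by simp [tent]
  rw [h0, Real.fourierInv_eq] at h
  simp only [inner_zero_right, AddChar.map_zero_eq_one, one_smul] at h
  rw [integral_congr_ae hae, integral_complex_ofReal, Measure.integral_comp_mul_left] at h
  have h' : |(2 * π)⁻¹| • ∫ y, kker y = 1 := by exact_mod_cast h
  rw [abs_of_pos (by positivity), smul_eq_mul] at h'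
  have := Real.pi_pos
  field_simp at h'
  linarith

abbrev E3 := EuclideanSpace ℝ (Fin 3)

lemma prod_integrable (g : ℝ → ℝ) (hg : Integrable g) :
    Integrable (fun q : E3 => ∏ j, g (q j)) := by
  have h : Integrable (fun q : Fin 3 → ℝ => ∏ j, g (q j)) :=
    Integrable.fintype_prod (f := fun _ => g) (fun _ => hg)
  exact (PiLp.volume_preserving_ofLp (Fin 3)).integrable_comp_of_integrable h

lemma prod_integral (g : ℝ → ℝ) :
    ∫ q : E3, ∏ j, g (q j) = (∫ t, g t) ^ 3 := by
  rw [← (PiLp.volume_preserving_toLp (Fin 3)).integral_comp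
    (MeasurableEquiv.toLp 2 (Fin 3 → ℝ)).measurableEmbedding]
  have := integral_fintype_prod_volume_eq_prod (ι := Fin 3) (fun _ => g)
  simpa using this

noncomputable def fs (s r : ℝ) : ℝ := r ^ 2 / (r ^ 2 + s⁻¹ ^ 2)

lemma fs_nonneg (s r : ℝ) : 0 ≤ fs s r := by unfold fs; positivity

lemma fs_le (s r : ℝ) : fs s r ≤ 1 := by
  unfold fs
  refine div_le_one_of_le₀ ?_ (by positivity)
  nlinarith [sq_nonneg s⁻¹]

lemma fs_lip (s : ℝ) (hs : 0 < s) (r t : ℝ) : |fs s r - fs s t| ≤ s * |r - t| := by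
  obtain ⟨a, ha, rfl⟩ : ∃ a : ℝ, 0 < a ∧ s = a⁻¹ := ⟨s⁻¹, by positivity, by simp⟩
  unfold fs
  rw [inv_inv]
  have h1 : 0 < r ^ 2 + a ^ 2 := by positivity
  have h2 : 0 < t ^ 2 + a ^ 2 := by positivity
  have : r ^ 2 / (r ^ 2 + a ^ 2) - t ^ 2 / (t ^ 2 + a ^ 2)
      = (a ^ 2 * (r + t) / ((r ^ 2 + a ^ 2) * (t ^ 2 + a ^ 2))) * (r - t) := by
    field_simp; ring
  rw [this, abs_mul]
  refine mul_le_mul_of_nonneg_right ?_ (abs_nonneg _)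
  rw [abs_div, abs_of_pos (mul_pos h1 h2), div_le_iff₀ (mul_pos h1 h2), inv_mul_eq_div,
    le_div_iff₀ ha, abs_mul, abs_of_pos (by positivity : 0 < a ^ 2)]
  have key : a * |r + t| * a ^ 2 ≤ (r ^ 2 + a ^ 2) * (t ^ 2 + a ^ 2) := by
    have e1 : a * |r + t| ≤ r ^ 2 + t ^ 2 + a ^ 2 := by
      have := abs_add_le r t
      nlinarith [sq_nonneg (2 * |r| - a), sq_nonneg (2 * |t| - a), sq_abs r, sq_abs t]
    nlinarith [mul_le_mul_of_nonneg_right e1 (sq_nonneg a), mul_nonneg (sq_nonneg r) (sq_nonneg t)]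
  linarith

lemma norm_le_prod (q : E3) : ‖q‖ ≤ ∏ j, (1 + |q j|) := by
  rw [EuclideanSpace.norm_eq, Fin.sum_univ_three, Fin.prod_univ_three]
  simp only [Real.norm_eq_abs]
  refine Real.sqrt_le_iff.2 ⟨by positivity, ?_⟩
  have h0 := abs_nonneg (q 0)
  have h1 := abs_nonneg (q 1)
  have h2 := abs_nonneg (q 2)
  have : |q 0| + |q 1| + |q 2| ≤ (1 + |q 0|) * (1 + |q 1|) * (1 + |q 2|) := by
    have : 0 ≤ |q 0| * |q 1| + |q 0| * |q 2| + |q 1| * |q 2| + |q 0| * |q 1| * |q 2| := by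
      positivity
    linarith
  refine le_trans ?_ (pow_le_pow_left₀ (by positivity) this 2)
  have : 0 ≤ |q 0| * |q 1| + |q 0| * |q 2| + |q 1| * |q 2| := by positivity
  linarith

lemma fs_diff (s : ℝ) (hs : 0 < s) (p q : E3) :
    |fs s ‖p‖ - fs s ‖p - q‖| ≤ Real.sqrt s * ∏ j, Real.sqrt (1 + |q j|) := by
  have hd1 : |fs s ‖p‖ - fs s ‖p - q‖| ≤ 1 := by
    rw [abs_le]
    constructor <;> linarith [fs_nonneg s ‖p‖, fs_nonneg s ‖p - q‖, fs_le s ‖p‖, fs_le s ‖p - q‖]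
  have hd2 : |fs s ‖p‖ - fs s ‖p - q‖| ≤ s * ‖q‖ := by
    refine (fs_lip s hs _ _).trans (mul_le_mul_of_nonneg_left ?_ hs.le)
    simpa using abs_norm_sub_norm_le p (p - q)
  have : ∏ j, Real.sqrt (1 + |q j|) = Real.sqrt (∏ j, (1 + |q j|)) := by
    rw [Fin.prod_univ_three, Fin.prod_univ_three, Real.sqrt_mul (by positivity),
      Real.sqrt_mul (by positivity)]
  rw [this, ← Real.sqrt_mul hs.le]
  refine Real.le_sqrt_of_sq_le ?_
  have h := mul_le_mul_of_nonneg_left (norm_le_prod q) hs.le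
  nlinarith [abs_nonneg (fs s ‖p‖ - fs s ‖p - q‖)]

theorem convolution_with_cube_fourier_sq_close :
    ∃ C > (0 : ℝ), ∀ s > (0 : ℝ), ∀ p : EuclideanSpace ℝ (Fin 3),
      |‖p‖ ^ 2 / (‖p‖ ^ 2 + s⁻¹ ^ 2)
          - (2 * π)⁻¹ ^ 3 * ∫ q : EuclideanSpace ℝ (Fin 3),
              (‖p - q‖ ^ 2 / (‖p - q‖ ^ 2 + s⁻¹ ^ 2)) *
                ∏ j, (2 * Real.sin (q j / 2) / q j) ^ 2|
        ≤ C * Real.sqrt s := by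
  set M : ℝ := (∫ t, Real.sqrt (1 + |t|) * kker t) ^ 3 with hM
  have hM0 : 0 ≤ M := by
    refine pow_nonneg (integral_nonneg fun t => ?_) 3
    exact mul_nonneg (Real.sqrt_nonneg _) (kker_nonneg t)
  refine ⟨(2 * π)⁻¹ ^ 3 * M + 1, by positivity, fun s hs p => ?_⟩
  change |fs s ‖p‖ - (2 * π)⁻¹ ^ 3 * ∫ q : E3, fs s ‖p - q‖ * ∏ j, kker (q j)| ≤ _
  have hK := prod_integrable kker kker_int
  have hKi := prod_integral kker
  rw [kker_integral] at hKi
  have hK0 : ∀ q : E3, 0 ≤ ∏ j, kker (q j) := fun q =>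
    Finset.prod_nonneg fun j _ => kker_nonneg _
  have hfK : Integrable (fun q : E3 => fs s ‖p - q‖ * ∏ j, kker (q j)) := by
    refine hK.mono' ?_ (Filter.Eventually.of_forall fun q => ?_)
    · refine AEStronglyMeasurable.mul ?_ hK.aestronglyMeasurable
      have : Measurable (fun q : E3 => fs s ‖p - q‖) := by unfold fs; fun_prop
      exact this.aestronglyMeasurable
    · rw [Real.norm_eq_abs, abs_of_nonneg (mul_nonneg (fs_nonneg _ _) (hK0 q))]
      exact mul_le_of_le_one_left (hK0 q) (fs_le _ _)
  have hpi := Real.pi_pos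
  have e1 : fs s ‖p‖ = (2 * π)⁻¹ ^ 3 * ∫ q : E3, fs s ‖p‖ * ∏ j, kker (q j) := by
    rw [integral_const_mul, hKi]
    field_simp
  rw [e1, ← mul_sub, ← integral_sub (hK.const_mul _) hfK, abs_mul,
    abs_of_pos (by positivity : 0 < (2 * π)⁻¹ ^ 3)]
  have hW := prod_integrable _ wker_int
  have hWi := prod_integral (fun t => Real.sqrt (1 + |t|) * kker t)
  have hb : |∫ q : E3, (fs s ‖p‖ * ∏ j, kker (q j) - fs s ‖p - q‖ * ∏ j, kker (q j))|
      ≤ Real.sqrt s * M := by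
    rw [hM, ← hWi, ← integral_const_mul, ← Real.norm_eq_abs]
    refine norm_integral_le_of_norm_le (hW.const_mul _) (Filter.Eventually.of_forall fun q => ?_)
    rw [Real.norm_eq_abs, ← sub_mul, abs_mul, abs_of_nonneg (hK0 q), Finset.prod_mul_distrib,
      ← mul_assoc]
    exact mul_le_mul_of_nonneg_right (fs_diff s hs p q) (hK0 q)
  have := mul_le_mul_of_nonneg_left hb (by positivity : 0 ≤ (2 * π)⁻¹ ^ 3)
  nlinarith [Real.sqrt_nonneg s]
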